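/- Projection three-point inequality: let x ∈ M, v ∈ T_xM, η > 0 with x − ηv ∈ Ū_M(γ), and x⁺ := P_M(x − ηv). Then for every z ∈ M: ⟨v, z − x⁺⟩ ≥ (1/(2η))(‖x⁺ − x‖² − ‖z − x‖²) + (1/(2η) − 3‖v‖/(4γ))·‖z − x⁺‖². -/

import Mathlib

open Metric
open scoped RealInnerProductSpace

noncomputable section

/-- `ℝ^{d×k}` with the Frobenius inner product and norm. -/
abbrev Mat (d k : ℕ) : Type := EuclideanSpace ℝ (Fin d × Fin k)

/-- `p` is a nearest point to `x` on `M`, i.e. a projection point `p ∈ P_M(x)`. -/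
def IsNearestPt {d k : ℕ} (M : Set (Mat d k)) (x p : Mat d k) : Prop :=
  p ∈ M ∧ ∀ u ∈ M, ‖x - p‖ ≤ ‖x - u‖

/-- `v` is a tangent vector of `M` at `x`: the derivative at `0` of a curve in `M` through `x`. -/
def IsTangentAt {d k : ℕ} (M : Set (Mat d k)) (x v : Mat d k) : Prop :=
  ∃ c : ℝ → Mat d k, (∀ s : ℝ, c s ∈ M) ∧ c 0 = x ∧ HasDerivAt c v 0

/-!
Where the nearest point `p` of `y` on `M` is unique, the squared distance `d²` to `M` has gradient
`2 (y - p)`. Let `p` be nearest to `q = p + w` and `T > 1`, and let `y` maximise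
`(T - 1) d² - T ‖· - q‖²`. By Fermat's rule its nearest point `p'` satisfies `y - p' = T (q - p')`,
so `q` lies between `p'` and `y`; hence `p'` is nearest to `q` as well and `p' = p`. Thus `p` is
nearest to `p + T w`, provided `y` lies within the radius `R` of proximal smoothness, which
`‖y - q‖ ≤ 2 (T - 1) ‖w‖` ensures when `(2 T - 1) ‖w‖ < R`. Continuous induction pushes the ray out
to distance `R`, where minimality of `p` is the normal inequality
`⟪w, z - p⟫ ≤ ‖w‖ / (2 R) ‖z - p‖²`. Apply it to `w = x - η v - x⁺`, which satisfies
`‖w‖ ≤ η ‖v‖` since `x ∈ M`, and expand `‖z - x‖²` around `x⁺`.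
-/

open Filter Topology

section MetricProjection

variable {X : Type*} [PseudoMetricSpace X] {M : Set X}

/-- `p` is a metric projection of `y` onto `M`, i.e. a point of `M` realising the distance from `y`.
This is `IsNearestPt` in an arbitrary metric space, expressed through `Metric.infDist`. -/
def IsMetricProjection (M : Set X) (y p : X) : Prop :=
  p ∈ M ∧ infDist y M = dist y p

/-- `M` is `R`-proximally smooth: points at distance less than `R` from `M` have exactly one metric
projection onto `M`. -/
def IsProximallySmooth (M : Set X) (R : ℝ) : Prop :=
  ∀ y, infDist y M < R → ∃! p, IsMetricProjection M y p

lemma isMetricProjection_iff_forall_dist_le {y p : X} :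
    IsMetricProjection M y p ↔ p ∈ M ∧ ∀ u ∈ M, dist y p ≤ dist y u := by
  refine and_congr_right fun hp => ⟨fun h u hu => h ▸ infDist_le_dist_of_mem hu, fun h => ?_⟩
  exact (infDist_le_dist_of_mem hp).antisymm ((le_infDist ⟨p, hp⟩).2 @h)

lemma isClosed_setOf_isMetricProjection (p : X) : IsClosed {y | IsMetricProjection M y p} :=
  isClosed_const.inter
    (isClosed_eq (continuous_infDist_pt M) (continuous_id.dist continuous_const))

lemma tendsto_of_isMetricProjection [ProperSpace X] (hM : IsClosed M) {y p : X}
    (huniq : ∀ q, IsMetricProjection M y q → q = p) {ι : Type*} {l : Filter ι} {f g : ι → X}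
    (hf : Tendsto f l (𝓝 y)) (hg : ∀ᶠ i in l, IsMetricProjection M (f i) (g i)) :
    Tendsto g l (𝓝 p) := by
  have hD : Tendsto (fun i => infDist (f i) M) l (𝓝 (infDist y M)) :=
    ((continuous_infDist_pt M).tendsto y).comp hf
  have hbdd : ∀ᶠ i in l, g i ∈ closedBall y (infDist y M + 2) := by
    filter_upwards [hg, hD.eventually_lt_const (lt_add_one _), hf (ball_mem_nhds y one_pos)]
      with i hgi hDi hfi
    have hfi : dist (f i) y < 1 := hfi
    rw [hgi.2] at hDi
    have := dist_triangle_left (g i) y (f i)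
    exact mem_closedBall.2 (by linarith)
  refine (isCompact_closedBall _ _).tendsto_nhds_of_unique_mapClusterPt hbdd fun q _ hq => ?_
  obtain ⟨U, hUl, hgU⟩ := mapClusterPt_iff_ultrafilter.1 hq
  have hmem : q ∈ M := hM.mem_of_tendsto hgU (hUl (hg.mono fun i hi => hi.1))
  have hdist : Tendsto (fun i => infDist (f i) M) U (𝓝 (dist y q)) :=
    ((hf.mono_left hUl).dist hgU).congr' (hUl (hg.mono fun i hi => hi.2.symm))
  exact huniq q ⟨hmem, tendsto_nhds_unique (hD.mono_left hUl) hdist⟩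

end MetricProjection

lemma IsProximallySmooth.isClosed {X : Type*} [MetricSpace X] {M : Set X} {R : ℝ}
    (hM : IsProximallySmooth M R) (hR : 0 < R) : IsClosed M := by
  refine isClosed_of_closure_subset fun y hy => ?_
  have hy0 : infDist y M = 0 := infDist_zero_of_mem_closure hy
  obtain ⟨p, ⟨hpM, hp⟩, -⟩ := hM y (hy0 ▸ hR)
  rwa [dist_eq_zero.1 (hp.symm.trans hy0)]

section NormedSpace

variable {E : Type*} [SeminormedAddCommGroup E] {M : Set E}

lemma IsMetricProjection.infDist_add {p w : E} (h : IsMetricProjection M (p + w) p) :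
    infDist (p + w) M = ‖w‖ := by
  rw [h.2, dist_self_add_left]

lemma IsMetricProjection.add_smul [NormedSpace ℝ E] {p w : E}
    (h : IsMetricProjection M (p + w) p) {t : ℝ} (ht₀ : 0 ≤ t) (ht₁ : t ≤ 1) :
    IsMetricProjection M (p + t • w) p := by
  rw [isMetricProjection_iff_forall_dist_le] at h ⊢
  refine ⟨h.1, fun u hu => ?_⟩
  have hfar : ‖w‖ ≤ dist (p + w) u := by simpa only [dist_self_add_left] using h.2 u hu
  have hstep : dist (p + w) (p + t • w) = (1 - t) * ‖w‖ := by
    rw [dist_add_left, dist_eq_norm, show w - t • w = (1 - t) • w by module, norm_smul,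
      Real.norm_of_nonneg (by linarith)]
  rw [dist_self_add_left, norm_smul, Real.norm_of_nonneg ht₀]
  linarith [dist_triangle_left (p + t • w) u (p + w), dist_triangle (p + w) (p + t • w) u]

/-- Squared distance to `M`, penalised by the squared distance to `q`. The weights are such that a
maximiser `y` with metric projection `p` onto `M` lies on the ray from `p` through `q`, `T` times as
far from `p` as `q`. -/
def penalizedSqDist (M : Set E) (q : E) (T : ℝ) (u : E) : ℝ :=
  (T - 1) * infDist u M ^ 2 - T * ‖u - q‖ ^ 2

lemma norm_sub_le_of_penalizedSqDist_le {q u : E} {T : ℝ} (hT : 1 < T)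
    (h : penalizedSqDist M q T q ≤ penalizedSqDist M q T u) :
    ‖u - q‖ ≤ 2 * (T - 1) * infDist q M := by
  have hlip : infDist u M ≤ infDist q M + ‖u - q‖ := by
    rw [← dist_eq_norm]
    exact infDist_le_infDist_add_dist
  have hsq : infDist u M ^ 2 ≤ (infDist q M + ‖u - q‖) ^ 2 := by
    gcongr
    exact infDist_nonneg
  have hprod : ‖u - q‖ * ‖u - q‖ ≤ 2 * (T - 1) * infDist q M * ‖u - q‖ := by
    simp only [penalizedSqDist, sub_self, norm_zero] at h
    linarith [mul_le_mul_of_nonneg_left hsq (sub_nonneg.2 hT.le)]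
  rcases (norm_nonneg (u - q)).eq_or_lt with h0 | hpos
  · rw [← h0]
    exact mul_nonneg (by linarith) infDist_nonneg
  · exact le_of_mul_le_mul_right hprod hpos

lemma exists_forall_penalizedSqDist_le [ProperSpace E] (M : Set E) (q : E) {T : ℝ} (hT : 1 < T) :
    ∃ y, ∀ u, penalizedSqDist M q T u ≤ penalizedSqDist M q T y := by
  have hcont : Continuous (penalizedSqDist M q T) := by
    unfold penalizedSqDist
    fun_prop
  refine hcont.exists_forall_ge' q ?_
  filter_upwards [(isCompact_closedBall q (2 * (T - 1) * infDist q M)).compl_mem_cocompact]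
    with u hu
  contrapose! hu
  rw [Set.notMem_compl_iff, mem_closedBall, dist_eq_norm]
  exact norm_sub_le_of_penalizedSqDist_le hT hu.le

end NormedSpace

section InnerProductSpace

variable {E : Type*} [NormedAddCommGroup E] [InnerProductSpace ℝ E] {M : Set E} {R : ℝ}

namespace IsMetricProjection

lemma two_mul_inner_le {p w z : E} (h : IsMetricProjection M (p + w) p) (hz : z ∈ M) :
    2 * ⟪w, z - p⟫ ≤ ‖z - p‖ ^ 2 := by
  have hle : ‖w‖ ≤ ‖w - (z - p)‖ := by
    have hdist := (isMetricProjection_iff_forall_dist_le.1 h).2 z hz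
    rwa [dist_self_add_left, dist_eq_norm, show p + w - z = w - (z - p) by abel] at hdist
  have hsq := pow_le_pow_left₀ (norm_nonneg _) hle 2
  rw [norm_sub_sq_real] at hsq
  linarith

lemma infDist_sq_sub_le {y p : E} (hp : IsMetricProjection M y p) (u : E) :
    infDist u M ^ 2 - infDist y M ^ 2 ≤ 2 * ⟪y - p, u - y⟫ + ‖u - y‖ ^ 2 := by
  have hsq : infDist u M ^ 2 ≤ ‖(y - p) + (u - y)‖ ^ 2 := by
    gcongr
    · exact infDist_nonneg
    · simpa only [dist_eq_norm, show y - p + (u - y) = u - p by abel]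
        using infDist_le_dist_of_mem hp.1
  rw [norm_add_sq_real] at hsq
  rw [hp.2, dist_eq_norm]
  linarith

lemma abs_infDist_sq_sub_le {y p u q : E} (hp : IsMetricProjection M y p)
    (hq : IsMetricProjection M u q) :
    |infDist u M ^ 2 - infDist y M ^ 2 - 2 * ⟪y - p, u - y⟫| ≤
      (‖u - y‖ + 2 * ‖q - p‖) * ‖u - y‖ := by
  have hupper := hp.infDist_sq_sub_le u
  have hlower := hq.infDist_sq_sub_le y
  have hinner : ⟪u - q, y - u⟫ = -⟪y - p, u - y⟫ - ‖u - y‖ ^ 2 + ⟪q - p, u - y⟫ := by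
    rw [← real_inner_self_eq_norm_sq, ← neg_sub u y, inner_neg_right,
      show u - q = (y - p) + (u - y) - (q - p) by abel, inner_sub_left, inner_add_left]
    ring
  rw [hinner, norm_sub_rev y u] at hlower
  have hcs := real_inner_le_norm (q - p) (u - y)
  rw [abs_le]
  constructor <;> nlinarith [norm_nonneg (u - y), norm_nonneg (q - p)]

variable [ProperSpace E]

lemma hasGradientAt_infDist_sq {y p : E} (hM : IsClosed M) (hp : IsMetricProjection M y p)
    (huniq : ∀ q, IsMetricProjection M y q → q = p) :
    HasGradientAt (fun u => infDist u M ^ 2) ((2 : ℝ) • (y - p)) y := by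
  choose g hg using fun u : E => hM.exists_infDist_eq_dist ⟨p, hp.1⟩ u
  have hg_lim : Tendsto g (𝓝 y) (𝓝 p) :=
    tendsto_of_isMetricProjection hM huniq tendsto_id (.of_forall hg)
  have hmodulus : Tendsto (fun u => ‖u - y‖ + 2 * ‖g u - p‖) (𝓝 y) (𝓝 0) := by
    simpa only [id, sub_self, norm_zero, mul_zero, add_zero] using
      (tendsto_id.sub_const y).norm.add ((hg_lim.sub_const p).norm.const_mul 2)
  rw [hasGradientAt_iff_isLittleO, Asymptotics.isLittleO_iff]
  intro c hc
  filter_upwards [hmodulus.eventually_le_const hc] with u hu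
  rw [real_inner_smul_left, Real.norm_eq_abs]
  exact (hp.abs_infDist_sq_sub_le (hg u)).trans (by gcongr)

lemma sub_eq_smul_of_forall_penalizedSqDist_le {y p q : E} (hM : IsClosed M)
    (hp : IsMetricProjection M y p) (huniq : ∀ p', IsMetricProjection M y p' → p' = p) {T : ℝ}
    (hmax : ∀ u, penalizedSqDist M q T u ≤ penalizedSqDist M q T y) :
    y - p = T • (q - p) := by
  have hD := (hp.hasGradientAt_infDist_sq hM huniq).hasFDerivAt
  have hpen := ((hasFDerivAt_id y).sub_const q).norm_sq
  have hzero := IsLocalMax.hasFDerivAt_eq_zero (Filter.Eventually.of_forall hmax)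
    ((hD.const_mul (T - 1)).sub (hpen.const_mul T))
  have hgrad : (T - 1) • (y - p) - T • (y - q) = 0 := by
    refine ext_inner_right ℝ fun h => ?_
    have := DFunLike.congr_fun hzero h
    simp only [map_smul, map_sub, id_eq, ContinuousLinearMap.comp_id, sub_apply, smul_apply,
      InnerProductSpace.toDual_apply_apply, smul_eq_mul, coe_innerSL_apply, nsmul_eq_mul,
      Nat.cast_ofNat, zero_apply, inner_sub_left, real_inner_smul_left, inner_zero_left] at this ⊢
    linarith
  rw [← sub_eq_zero, ← neg_eq_zero, ← hgrad]
  module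

end IsMetricProjection

variable [ProperSpace E]

namespace IsProximallySmooth

lemma isMetricProjection_add_smul_of_lt (hM : IsProximallySmooth M R) {p w : E}
    (h : IsMetricProjection M (p + w) p) {T : ℝ} (hT : 1 < T) (hTR : (2 * T - 1) * ‖w‖ < R) :
    IsMetricProjection M (p + T • w) p := by
  have hw : infDist (p + w) M = ‖w‖ := h.infDist_add
  obtain ⟨y, hmax⟩ := exists_forall_penalizedSqDist_le M (p + w) hT
  have hyq : ‖y - (p + w)‖ ≤ 2 * (T - 1) * ‖w‖ := by
    rw [← hw]
    exact norm_sub_le_of_penalizedSqDist_le hT (hmax _)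
  have hyR : infDist y M < R := by
    have := infDist_le_infDist_add_dist (s := M) (x := y) (y := p + w)
    rw [dist_eq_norm] at this
    linarith
  obtain ⟨p', hp', huniq⟩ := hM y hyR
  have hy : y - p' = T • (p + w - p') :=
    hp'.sub_eq_smul_of_forall_penalizedSqDist_le (hM.isClosed (infDist_nonneg.trans_lt hyR))
      huniq hmax
  have hback : IsMetricProjection M (p + w) p' := by
    have hp'y : IsMetricProjection M (p' + (y - p')) p' := by rwa [add_sub_cancel]
    have := hp'y.add_smul (inv_nonneg.2 (by linarith)) (inv_le_one_of_one_le₀ hT.le)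
    rwa [hy, inv_smul_smul₀ (by linarith), add_sub_cancel] at this
  have hp'p : p' = p := by
    refine (hM (p + w) ?_).unique hback h
    rw [hw]
    nlinarith [norm_nonneg w]
  subst hp'p
  rw [add_sub_cancel_left] at hy
  rwa [← hy, add_sub_cancel]

lemma isMetricProjection_add_smul (hM : IsProximallySmooth M R) {p w : E}
    (h : IsMetricProjection M (p + w) p) {T : ℝ} (hT : 1 ≤ T) (hTR : T * ‖w‖ ≤ R) :
    IsMetricProjection M (p + T • w) p := by
  rcases (norm_nonneg w).eq_or_lt with hw | hw
  · rw [norm_eq_zero.1 hw.symm] at h ⊢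
    rwa [smul_zero]
  have hclosed : IsClosed {t : ℝ | IsMetricProjection M (p + t • w) p} :=
    (isClosed_setOf_isMetricProjection p).preimage (by fun_prop)
  refine IsClosed.Icc_subset_of_forall_exists_gt (hclosed.inter isClosed_Icc)
    (by simpa using h) ?_ (Set.right_mem_Icc.2 hT)
  rintro t ⟨ht, ht₁, htT⟩ s (hts : t < s)
  have ht₀ : 0 < t := by linarith
  obtain ⟨r, htr, hr⟩ := exists_between (lt_min hts (show t < (t + T) / 2 by linarith))
  obtain ⟨hrs, hrT⟩ := lt_min_iff.1 hr
  refine ⟨r, ?_, htr, hrs.le⟩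
  have hratio : (2 * (r / t) - 1) * ‖t • w‖ < R := by
    rw [norm_smul, Real.norm_of_nonneg ht₀.le]
    calc (2 * (r / t) - 1) * (t * ‖w‖) = (2 * r - t) * ‖w‖ := by field_simp
      _ < T * ‖w‖ := by gcongr; linarith
      _ ≤ R := hTR
  have := hM.isMetricProjection_add_smul_of_lt ht ((one_lt_div ht₀).2 htr) hratio
  rwa [smul_smul, div_mul_cancel₀ _ ht₀.ne'] at this

theorem inner_le (hM : IsProximallySmooth M R) {p w z : E} (h : IsMetricProjection M (p + w) p)
    (hw : ‖w‖ ≤ R) (hz : z ∈ M) : ⟪w, z - p⟫ ≤ ‖w‖ / (2 * R) * ‖z - p‖ ^ 2 := by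
  rcases (norm_nonneg w).eq_or_lt with hw₀ | hw₀
  · simp [norm_eq_zero.1 hw₀.symm]
  have hR : 0 < R := hw₀.trans_le hw
  have hray : IsMetricProjection M (p + (R / ‖w‖) • w) p :=
    hM.isMetricProjection_add_smul h ((one_le_div hw₀).2 hw) (div_mul_cancel₀ _ hw₀.ne').le
  have hnormal := hray.two_mul_inner_le hz
  rw [real_inner_smul_left] at hnormal
  calc ⟪w, z - p⟫ = ‖w‖ / (2 * R) * (2 * (R / ‖w‖ * ⟪w, z - p⟫)) := by field_simp
    _ ≤ ‖w‖ / (2 * R) * ‖z - p‖ ^ 2 := by gcongr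

end IsProximallySmooth

theorem projection_three_point_inequality_general (hR : 0 < R) (hM : IsProximallySmooth M R)
    {x v : E} (hx : x ∈ M) {η : ℝ} (hη : 0 < η) (htube : infDist (x - η • v) M ≤ R) {xplus : E}
    (hxplus : IsMetricProjection M (x - η • v) xplus) {z : E} (hz : z ∈ M) :
    1 / (2 * η) * (‖xplus - x‖ ^ 2 - ‖z - x‖ ^ 2)
      + (1 / (2 * η) - ‖v‖ / (2 * R)) * ‖z - xplus‖ ^ 2 ≤ ⟪v, z - xplus⟫ := by
  obtain ⟨w, hw⟩ : ∃ w, x - η • v = xplus + w := ⟨_, (add_sub_cancel _ _).symm⟩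
  rw [hw] at htube hxplus
  have hwv : ‖w‖ ≤ η * ‖v‖ := by
    have hle : infDist (xplus + w) M ≤ dist (xplus + w) x := infDist_le_dist_of_mem hx
    rwa [hxplus.infDist_add, ← hw, dist_eq_norm, sub_sub_cancel_left, norm_neg, norm_smul,
      Real.norm_of_nonneg hη.le] at hle
  have hnormal : ⟪w, z - xplus⟫ ≤ η * ‖v‖ / (2 * R) * ‖z - xplus‖ ^ 2 :=
    (hM.inner_le hxplus (hxplus.infDist_add ▸ htube) hz).trans (by gcongr)
  have hinner : η * ⟪v, z - xplus⟫ = ⟪x - xplus, z - xplus⟫ - ⟪w, z - xplus⟫ := by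
    rw [← real_inner_smul_left, ← inner_sub_left, sub_sub, ← hw, sub_sub_cancel]
  have hcosine : ‖z - x‖ ^ 2 =
      ‖z - xplus‖ ^ 2 - 2 * ⟪x - xplus, z - xplus⟫ + ‖xplus - x‖ ^ 2 := by
    rw [real_inner_comm, norm_sub_rev xplus x, ← norm_sub_sq_real, sub_sub_sub_cancel_right]
  refine le_of_mul_le_mul_left ?_ hη
  calc η * (1 / (2 * η) * (‖xplus - x‖ ^ 2 - ‖z - x‖ ^ 2)
        + (1 / (2 * η) - ‖v‖ / (2 * R)) * ‖z - xplus‖ ^ 2)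
      = (‖xplus - x‖ ^ 2 - ‖z - x‖ ^ 2 + ‖z - xplus‖ ^ 2) / 2
        - η * ‖v‖ / (2 * R) * ‖z - xplus‖ ^ 2 := by field_simp; ring
    _ ≤ η * ⟪v, z - xplus⟫ := by linarith

end InnerProductSpace

lemma isMetricProjection_iff_isNearestPt {d k : ℕ} {M : Set (Mat d k)} {y p : Mat d k} :
    IsMetricProjection M y p ↔ IsNearestPt M y p := by
  simp only [isMetricProjection_iff_forall_dist_le, IsNearestPt, dist_eq_norm]

/-- Projection three-point inequality: let `x ∈ M`, `v ∈ T_x M`, `η > 0` with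
`x - ηv ∈ Ū_M(γ)`, and `x⁺ := P_M(x - ηv)`. Then for every `z ∈ M`,
`⟪v, z - x⁺⟫ ≥ (1/(2η)) (‖x⁺ - x‖² - ‖z - x‖²) + (1/(2η) - 3‖v‖/(4γ)) ‖z - x⁺‖²`. -/
theorem projection_three_point_inequality
    {d k : ℕ} (M : Set (Mat d k)) (hMne : M.Nonempty) (hMcpt : IsCompact M)
    (γ : ℝ) (hγ : 0 < γ)
    (P : Mat d k → Mat d k) (hP : ∀ y, IsNearestPt M y (P y))
    (hprox : ∀ y : Mat d k, infDist y M < 2 * γ → ∀ p, IsNearestPt M y p → p = P y)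
    (x v : Mat d k) (hx : x ∈ M) (hv : IsTangentAt M x v)
    (η : ℝ) (hη : 0 < η) (htube : infDist (x - η • v) M ≤ γ)
    (xplus : Mat d k) (hxplus : xplus = P (x - η • v)) :
    ∀ z ∈ M, ⟪v, z - xplus⟫ ≥
      1 / (2 * η) * (‖xplus - x‖ ^ 2 - ‖z - x‖ ^ 2)
        + (1 / (2 * η) - 3 * ‖v‖ / (4 * γ)) * ‖z - xplus‖ ^ 2 := by
  intro z hz
  simp only [← isMetricProjection_iff_isNearestPt] at hP hprox
  have hsmooth : IsProximallySmooth M (2 * γ) := fun y hy => ⟨P y, hP y, hprox y hy⟩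
  refine le_trans ?_ (projection_three_point_inequality_general (by positivity) hsmooth hx hη
    (by linarith) (hxplus ▸ hP _) hz)
  gcongr _ + (_ - ?_) * _
  calc ‖v‖ / (2 * (2 * γ)) = 1 * ‖v‖ / (4 * γ) := by ring
    _ ≤ 3 * ‖v‖ / (4 * γ) := by gcongr; norm_num
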